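/- Aut(SL_2(k)) ≅ PΓL_2(k), i.e., every automorphism of SL_2(k) is induced by a semilinear automorphism of k^2: it is the composition of conjugation by an element of GL_2(k) with the entrywise action of a field automorphism of k. -/

import Mathlib

/-!
An injective homomorphism `φ : SL₂(k) → SL₂(K)` between fields of equal characteristic sends
transvections to matrices of trace `2`: in characteristic `p` because an element of order `p` is
unipotent, in characteristic `0` because a transvection `A` is conjugate to `A ^ 4` although
`A ^ 15 ≠ 1`. Two non-commuting matrices of trace `2` can be conjugated simultaneously into the
upper and lower unitriangular groups, so up to conjugation by an element of `GL₂(K)` there are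
additive maps `a` and `b` with `φ (upper x) = upper (a x)`, `φ (lower x) = lower (b x)` and
`a 1 = 1`. The braid relation between `upper x` and `lower y` holds only for `y = -x⁻¹`, hence
`a x * b x⁻¹ = 1`, and conjugation by the Weyl element gives `b = a`. Finally `diag(x, x⁻¹)` is a
word in `upper x`, `lower (-x⁻¹)`, `upper (-1)` and `lower 1`, so multiplicativity of `φ` on the
diagonal torus makes `a` a field homomorphism `σ`, and `φ` is entrywise application of `σ`.
-/

namespace AutSL2

open Matrix hiding transvection map
open Matrix.SpecialLinearGroup
open scoped MatrixGroups

section Conjugation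

variable {n R S : Type*} [Fintype n] [DecidableEq n] [CommRing R] [CommRing S]

/-- The action of `GL n R` on `SL n R` by conjugation `A ↦ g * A * g⁻¹`, the linear part of the
action of the semilinear group. -/
def conjGL : GL n R →* MulAut (SpecialLinearGroup n R) where
  toFun g :=
    { toFun A := ⟨g.1 * A.1 * g⁻¹.1, by rw [det_units_conj, A.det_coe]⟩
      invFun A := ⟨g⁻¹.1 * A.1 * g.1, by rw [det_units_conj', A.det_coe]⟩
      left_inv A := Subtype.ext <| by simp [mul_assoc]
      right_inv A := Subtype.ext <| by simp [mul_assoc]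
      map_mul' A B := Subtype.ext <|
        show g.1 * (A.1 * B.1) * g⁻¹.1 = g.1 * A.1 * g⁻¹.1 * (g.1 * B.1 * g⁻¹.1) by
          simp [mul_assoc] }
  map_one' := MulEquiv.ext fun A ↦ Subtype.ext <| show 1 * A.1 * (1 : GL n R)⁻¹.1 = A.1 by simp
  map_mul' g h := MulEquiv.ext fun A ↦ Subtype.ext <|
    show (g * h).1 * A.1 * (g * h)⁻¹.1 = g.1 * (h.1 * A.1 * h⁻¹.1) * g⁻¹.1 by simp [mul_assoc]

lemma coe_conjGL (g : GL n R) (A : SpecialLinearGroup n R) :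
    (conjGL g A).1 = g.1 * A.1 * g⁻¹.1 := rfl

lemma conjGL_eq_iff {g : GL n R} {A B : SpecialLinearGroup n R} :
    conjGL g A = B ↔ g.1 * A.1 = B.1 * g.1 := by
  rw [← Units.mul_inv_eq_iff_eq_mul, ← coe_conjGL]
  exact Subtype.ext_iff

lemma trace_conjGL (g : GL n R) (A : SpecialLinearGroup n R) :
    (conjGL g A).1.trace = A.1.trace :=
  trace_units_conj g A.1

lemma conjGL_toGL (A B : SpecialLinearGroup n R) : conjGL (toGL A) B = A * B * A⁻¹ := rfl

lemma trace_eq_of_isConj {A B : SpecialLinearGroup n R} (h : IsConj A B) :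
    A.1.trace = B.1.trace := by
  obtain ⟨C, rfl⟩ := isConj_iff.1 h
  rw [← conjGL_toGL, trace_conjGL]

lemma map_transvection (σ : R →+* S) {i j : n} (hij : i ≠ j) (x : R) :
    map σ (transvection hij x) = transvection hij (σ x) :=
  Subtype.ext <| by simp [transvection_coe, Matrix.map_add]

lemma eq_and_eq_scalar_of_forall_mul_map_eq [Nontrivial n] {g : GL n S} {σ τ : R →+* S}
    (h : ∀ A : SpecialLinearGroup n R, g.1 * (map σ A).1 = (map τ A).1 * g.1) :
    σ = τ ∧ ∃ c : Sˣ, g.1 = (c : S) • (1 : Matrix n n S) := by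
  have hsingle (i j : n) (hij : i ≠ j) (x : R) :
      g.1 * single i j (σ x) = single i j (τ x) * g.1 := by
    simpa only [map_transvection, transvection_coe, mul_add, add_mul, mul_one, one_mul,
      add_right_inj] using h (transvection hij x)
  obtain ⟨c, hc⟩ : g.1 ∈ Set.range (scalar n) :=
    mem_range_scalar_of_commute_single fun i j hij ↦ by
      simpa only [map_one] using! (hsingle i j hij 1).symm
  have hc_unit : IsUnit c := by
    have hdet := isUnits_det_units g
    rwa [← hc, scalar_apply, det_diagonal, Finset.prod_const, Finset.card_univ,
      isUnit_pow_iff Fintype.card_ne_zero] at hdet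
  obtain ⟨i, j, hij⟩ := exists_pair_ne n
  refine ⟨RingHom.ext fun x ↦ hc_unit.mul_left_cancel ?_, hc_unit.unit, ?_⟩
  · simpa [← hc, mul_comm (τ x)] using congr($(hsingle i j hij x) i j)
  · rw [← hc, IsUnit.unit_spec, smul_one_eq_diagonal, scalar_apply]

end Conjugation

section Transvections

variable {ι R S : Type*} [Fintype ι] [DecidableEq ι] [CommRing R] [CommRing S]

lemma transvection_injective {i j : ι} (hij : i ≠ j) :
    Function.Injective (transvection hij : R → SpecialLinearGroup ι R) := fun x y h ↦ by
  simpa [transvection_coe, hij] using congr($h i j)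

lemma transvection_pow {i j : ι} (hij : i ≠ j) (x : R) (m : ℕ) :
    transvection hij x ^ m = transvection hij (m * x) := by
  induction m with
  | zero => simp
  | succ m ih => rw [pow_succ, ih, ← transvection_add, Nat.cast_succ, add_one_mul]

lemma commute_transvection {i j : ι} (hij : i ≠ j) (x y : R) :
    Commute (transvection hij x) (transvection hij y) := by
  rw [Commute, SemiconjBy, ← transvection_add, add_comm, transvection_add]

lemma exists_addMonoidHom_map_transvection {κ : Type*} [Fintype κ] [DecidableEq κ]
    {φ : SpecialLinearGroup ι R →* SpecialLinearGroup κ S} {i j : ι} {hij : i ≠ j} {l m : κ}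
    {hlm : l ≠ m} (h : ∀ x, ∃ y : S, φ (transvection hij x) = transvection hlm y) :
    ∃ a : R →+ S, ∀ x, φ (transvection hij x) = transvection hlm (a x) := by
  choose a ha using h
  refine ⟨AddMonoidHom.mk' a fun x y ↦ transvection_injective hlm ?_, ha⟩
  rw [← ha, transvection_add, map_mul, ha, ha, ← transvection_add]

lemma isConj_transvection {k : Type*} [Field k] {i j : ι} (hij : i ≠ j) {a : k} (ha : a ≠ 0)
    (x : k) : IsConj (transvection hij x) (transvection hij (a ^ 2 * x)) := by
  refine isConj_iff.2 ⟨diag2n hij a ha, mul_inv_eq_iff_eq_mul.2 <| Subtype.ext ?_⟩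
  ext l m
  simp only [coe_mul, transvection_coe, diag2n_coe, diagonal_mul, mul_diagonal, Matrix.add_apply,
    single_apply, one_apply]
  grind

end Transvections

section UpperLower

variable {R : Type*} [CommRing R]

/-- The upper unitriangular matrix with off-diagonal entry `x`. Together with the `lower` ones these
matrices generate `SL(2, k)` over a field. -/
abbrev upper (x : R) : SL(2, R) := transvection zero_ne_one x

/-- The lower unitriangular matrix with off-diagonal entry `x`, opposite to `upper x`. -/
abbrev lower (x : R) : SL(2, R) := transvection one_ne_zero x

lemma coe_upper (x : R) : (upper x).1 = !![1, x; 0, 1] := by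
  ext i j; fin_cases i <;> fin_cases j <;> simp [transvection_coe]

lemma coe_lower (x : R) : (lower x).1 = !![1, 0; x, 1] := by
  ext i j; fin_cases i <;> fin_cases j <;> simp [transvection_coe]

lemma not_commute_upper_lower [NoZeroDivisors R] {x y : R} (hx : x ≠ 0) (hy : y ≠ 0) :
    ¬ Commute (upper x) (lower y) := fun h ↦ by
  have h00 := congr(($h.eq).1 0 0)
  simp [coe_mul, coe_upper, coe_lower, hx, hy] at h00

lemma monoidHom_ext_upper_lower {k M : Type*} [Field k] [Monoid M] {f g : SL(2, k) →* M}
    (hu : ∀ x, f (upper x) = g (upper x)) (hl : ∀ x, f (lower x) = g (lower x)) : f = g := by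
  ext A
  refine SL2.transvection_induction (fun A ↦ f A = g A) (fun i j hij c ↦ ?_)
    (fun A B hA hB ↦ by rw [map_mul, map_mul, hA, hB]) A
  fin_cases i <;> fin_cases j
  exacts [absurd rfl hij, hu c, hl c, absurd rfl hij]

lemma braid_upper_lower {k : Type*} [Field k] {x : k} (hx : x ≠ 0) :
    upper x * lower (-x⁻¹) * upper x = lower (-x⁻¹) * upper x * lower (-x⁻¹) := by
  ext i j
  fin_cases i <;> fin_cases j <;> simp [coe_upper, coe_lower, hx]

lemma mul_eq_neg_one_of_braid_upper_lower [NoZeroDivisors R] {x y : R} (hx : x ≠ 0)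
    (h : upper x * lower y * upper x = lower y * upper x * lower y) : x * y = -1 := by
  have h01 : (1 + x * y) * x + x = x := by
    simpa [coe_mul, coe_upper, coe_lower] using congr(($h).1 0 1)
  have : (x * y + 1) * x = 0 := by linear_combination h01
  exact eq_neg_of_add_eq_zero_left ((mul_eq_zero.1 this).resolve_right hx)

lemma weyl_mul_upper (x : R) :
    upper 1 * lower (-1) * upper 1 * upper x = lower (-x) * (upper 1 * lower (-1) * upper 1) := by
  ext i j
  fin_cases i <;> fin_cases j <;> simp [coe_upper, coe_lower]

end UpperLower

section Unipotent

lemma trace_eq_card_of_pow_char_eq_one {n R : Type*} [Fintype n] [DecidableEq n] [Nonempty n]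
    [CommRing R] [IsReduced R] (p : ℕ) [Fact p.Prime] [CharP R p] {M : Matrix n n R}
    (h : M ^ p = 1) : M.trace = Fintype.card n := by
  have hnil : IsNilpotent (M - 1) :=
    ⟨p, by rw [sub_pow_char_of_commute (p := p) (h := Commute.one_right _), h, one_pow, sub_self]⟩
  have htrace := (isNilpotent_trace_of_isNilpotent hnil).eq_zero
  rwa [trace_sub, trace_one, sub_eq_zero] at htrace

variable {R : Type*} [CommRing R]

lemma sq_eq_trace_smul_sub_one (A : SL(2, R)) : A.1 ^ 2 = A.1.trace • A.1 - 1 := by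
  nontriviality R
  have h := A.1.aeval_self_charpoly
  simp only [charpoly_fin_two, A.det_coe, map_add, map_sub, map_mul, map_pow, Polynomial.aeval_X,
    Polynomial.aeval_C, map_one, ← Algebra.smul_def] at h
  rwa [sub_add, sub_eq_zero] at h

lemma trace_sq (A : SL(2, R)) : (A ^ 2).1.trace = A.1.trace ^ 2 - 2 := by
  rw [coe_pow, sq_eq_trace_smul_sub_one, trace_sub, trace_smul, trace_one, smul_eq_mul, ← sq,
    Fintype.card_fin, Nat.cast_ofNat]

lemma pow_three_eq_one_of_trace_eq {A : SL(2, R)} (h : A.1.trace = -1) : A ^ 3 = 1 := by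
  have hsq := sq_eq_trace_smul_sub_one A
  rw [h] at hsq
  refine Subtype.ext ?_
  rw [coe_pow, coe_one, pow_succ, hsq, sub_mul, smul_mul_assoc, ← sq, hsq, one_mul]
  module

lemma pow_five_eq_one_of_trace_sq_add_trace_eq_one {A : SL(2, R)}
    (h : A.1.trace ^ 2 + A.1.trace = 1) : A ^ 5 = 1 := by
  set t := A.1.trace
  have hsq : A.1 ^ 2 = t • A.1 - 1 := sq_eq_trace_smul_sub_one A
  have hfour : A.1 ^ 4 = t • (1 : Matrix (Fin 2) (Fin 2) R) - A.1 := by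
    calc A.1 ^ 4 = (A.1 ^ 2) ^ 2 := by rw [← pow_mul]
      _ = t ^ 2 • A.1 ^ 2 - (2 * t) • A.1 + 1 := by
        rw [hsq, (Commute.one_right _).sub_sq, smul_pow, hsq, mul_one, one_pow, two_mul,
          ← smul_smul]
        module
      _ = (t ^ 3 - 2 * t) • A.1 - (t ^ 2 - 1) • (1 : Matrix (Fin 2) (Fin 2) R) := by
        rw [hsq]; module
      _ = _ := by
        rw [show t ^ 3 - 2 * t = -1 by linear_combination (t - 1) * h,
          show t ^ 2 - 1 = -t by linear_combination h]
        module
  refine Subtype.ext ?_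
  rw [coe_pow, coe_one, pow_succ, hfour, sub_mul, ← sq, hsq, smul_mul_assoc, one_mul]
  abel

-- The eigenvalues `λ, λ⁻¹` of `A` satisfy `λ ^ 4 = λ` or `λ ^ 4 = λ⁻¹`, so `λ ^ 3 = 1` or
-- `λ ^ 5 = 1`, and each of these makes `A ^ 15 = 1` unless `λ = 1`.
lemma trace_eq_two_of_isConj_pow_four [NoZeroDivisors R] {A : SL(2, R)} (h : IsConj A (A ^ 4))
    (h15 : A ^ 15 ≠ 1) : A.1.trace = 2 := by
  have hchebyshev : A.1.trace = (A.1.trace ^ 2 - 2) ^ 2 - 2 := by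
    rw [← trace_sq, ← trace_sq, ← pow_mul]
    exact trace_eq_of_isConj h
  have hfactor : (A.1.trace - 2) * ((A.1.trace + 1) * (A.1.trace ^ 2 + A.1.trace - 1)) = 0 := by
    linear_combination -hchebyshev
  rcases mul_eq_zero.1 hfactor with h2 | hfactor
  · exact sub_eq_zero.1 h2
  refine absurd ?_ h15
  rcases mul_eq_zero.1 hfactor with h3 | h5
  · rw [show 15 = 3 * 5 from rfl, pow_mul,
      pow_three_eq_one_of_trace_eq (eq_neg_of_add_eq_zero_left h3), one_pow]
  · rw [show 15 = 5 * 3 from rfl, pow_mul,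
      pow_five_eq_one_of_trace_sq_add_trace_eq_one (sub_eq_zero.1 h5), one_pow]

theorem trace_map_transvection {ι k K : Type*} [Fintype ι] [DecidableEq ι] [Field k] [Field K]
    (p : ℕ) [CharP k p] [CharP K p] {φ : SpecialLinearGroup ι k →* SL(2, K)}
    (hφ : Function.Injective φ) {i j : ι} (hij : i ≠ j) (x : k) :
    (φ (transvection hij x)).1.trace = 2 := by
  rcases CharP.char_is_prime_or_zero k p with hp | rfl
  · have : Fact p.Prime := ⟨hp⟩
    have hpow : φ (transvection hij x) ^ p = 1 := by
      rw [← map_pow, transvection_pow, CharP.cast_eq_zero, zero_mul, transvection_coeff_zero,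
        map_one]
    simpa using trace_eq_card_of_pow_char_eq_one p (congrArg Subtype.val hpow)
  · have : CharZero k := CharP.charP_to_charZero k
    rcases eq_or_ne x 0 with rfl | hx
    · simp
    apply trace_eq_two_of_isConj_pow_four
    · rw [← map_pow, transvection_pow]
      have hconj := φ.map_isConj (isConj_transvection hij (two_ne_zero (α := k)) x)
      convert hconj using 3
      norm_num
    · rw [← map_pow, map_ne_one_iff φ hφ, transvection_pow, ← transvection_coeff_zero hij,
        (transvection_injective hij).ne_iff]
      simpa using hx

end Unipotent

section NormalForm

variable {R : Type*} [CommRing R]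

lemma apply_self_eq_one_of_trace_eq_two [IsReduced R] {A : SL(2, R)} (htr : A.1.trace = 2)
    (h : A 0 1 * A 1 0 = 0) : A 0 0 = 1 ∧ A 1 1 = 1 := by
  have hdet := A.det_coe
  rw [det_fin_two] at hdet
  rw [trace_fin_two] at htr
  have hsq : (A 0 0 - 1) ^ 2 = 0 := by linear_combination A 0 0 * htr - hdet - h
  have h00 : A 0 0 = 1 := sub_eq_zero.1 (sq_eq_zero_iff.1 hsq)
  exact ⟨h00, by linear_combination htr - h00⟩

lemma eq_upper_of_trace_eq_two [IsReduced R] {A : SL(2, R)} (htr : A.1.trace = 2)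
    (h10 : A 1 0 = 0) : A = upper (A 0 1) := by
  obtain ⟨h00, h11⟩ := apply_self_eq_one_of_trace_eq_two htr (mul_eq_zero_of_right _ h10)
  ext i j
  fin_cases i <;> fin_cases j <;> simp [coe_upper, h00, h10, h11]

lemma eq_lower_of_trace_eq_two [IsReduced R] {A : SL(2, R)} (htr : A.1.trace = 2)
    (h01 : A 0 1 = 0) : A = lower (A 1 0) := by
  obtain ⟨h00, h11⟩ := apply_self_eq_one_of_trace_eq_two htr (mul_eq_zero_of_left h01 _)
  ext i j
  fin_cases i <;> fin_cases j <;> simp [coe_lower, h00, h01, h11]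

lemma exists_eq_upper_of_commute [NoZeroDivisors R] {A : SL(2, R)} (htr : A.1.trace = 2) {x : R}
    (hx : x ≠ 0) (h : Commute A (upper x)) : ∃ y, A = upper y := by
  have h00 := congr(($h.eq).1 0 0)
  exact ⟨_, eq_upper_of_trace_eq_two htr (by simpa [coe_upper, mul_apply, hx] using h00)⟩

lemma exists_eq_lower_of_commute [NoZeroDivisors R] {A : SL(2, R)} (htr : A.1.trace = 2) {x : R}
    (hx : x ≠ 0) (h : Commute A (lower x)) : ∃ y, A = lower y := by
  have h00 := congr(($h.eq).1 0 0)
  exact ⟨_, eq_lower_of_trace_eq_two htr (by simpa [coe_lower, mul_apply, hx] using h00)⟩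

variable {K : Type*} [Field K]

lemma exists_conjGL_upper_one_eq {A : SL(2, K)} (htr : A.1.trace = 2) (hA : A ≠ 1) :
    ∃ g : GL (Fin 2) K, conjGL g (upper 1) = A := by
  by_cases h10 : A 1 0 = 0
  · obtain ⟨x, rfl⟩ : ∃ x, A = upper x := ⟨_, eq_upper_of_trace_eq_two htr h10⟩
    have hx : x ≠ 0 := fun hx ↦ hA (hx ▸ transvection_coeff_zero _)
    refine ⟨.mkOfDetNeZero !![x, 0; 0, 1] (by simpa using hx), conjGL_eq_iff.2 ?_⟩
    simp [coe_upper, GeneralLinearGroup.mkOfDetNeZero]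
  · induction A using fin_two_induction with | h a b c d hdet
    rw [trace_fin_two_of] at htr
    refine ⟨.mkOfDetNeZero !![a - 1, 1; c, 0] (by simpa using h10), conjGL_eq_iff.2 ?_⟩
    change !![a - 1, 1; c, 0] * (upper 1).1 = !![a, b; c, d] * !![a - 1, 1; c, 0]
    rw [coe_upper, mul_fin_two, mul_fin_two]
    congrm !![?_, ?_; ?_, ?_]
    · linear_combination hdet - a * htr
    · ring
    · linear_combination -c * htr
    · ring

lemma exists_upper_mul_lower_mul_upper_inv_eq {A : SL(2, K)} (htr : A.1.trace = 2)
    (h10 : A 1 0 ≠ 0) : ∃ x y, upper x * lower y * (upper x)⁻¹ = A := by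
  induction A using fin_two_induction with | h a b c d hdet
  rw [trace_fin_two_of] at htr
  have hc : c ≠ 0 := h10
  refine ⟨(a - 1) / c, c, mul_inv_eq_iff_eq_mul.2 <| Subtype.ext ?_⟩
  change (upper _).1 * (lower _).1 = !![a, b; c, d] * (upper _).1
  rw [coe_upper, coe_lower, mul_fin_two, mul_fin_two]
  congrm !![?_, ?_; ?_, ?_] <;> field_simp
  · ring
  · linear_combination hdet - a * htr
  · ring
  · linear_combination -htr

theorem exists_conjGL_upper_lower_eq {A B : SL(2, K)} (hA : A.1.trace = 2) (hB : B.1.trace = 2)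
    (hAB : ¬ Commute A B) :
    ∃ (g : GL (Fin 2) K) (c : K), conjGL g (upper 1) = A ∧ conjGL g (lower c) = B := by
  obtain ⟨g, rfl⟩ := exists_conjGL_upper_one_eq hA fun h ↦ hAB (h ▸ Commute.one_left B)
  obtain ⟨B, rfl⟩ := (conjGL g).surjective B
  rw [trace_conjGL] at hB
  have h10 : B 1 0 ≠ 0 := fun h ↦ hAB <| by
    rw [eq_upper_of_trace_eq_two hB h]
    exact (commute_transvection _ _ _).map (conjGL g)
  obtain ⟨x, c, rfl⟩ := exists_upper_mul_lower_mul_upper_inv_eq hB h10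
  refine ⟨g * toGL (upper x), c, ?_, ?_⟩
  · rw [map_mul, MulAut.mul_apply, conjGL_toGL, (commute_transvection _ x 1).eq,
      mul_inv_cancel_right]
  · rw [map_mul, MulAut.mul_apply, conjGL_toGL]

end NormalForm

section Homomorphisms

variable {k K : Type*} [Field k] [Field K] {φ : SL(2, k) →* SL(2, K)} {a b : k →+ K}

lemma mul_eq_neg_one_of_map_upper_lower (hφ : Function.Injective φ)
    (hu : ∀ x, φ (upper x) = upper (a x)) (hl : ∀ x, φ (lower x) = lower (b x)) {x : k}
    (hx : x ≠ 0) : a x * b (-x⁻¹) = -1 := by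
  have hax : a x ≠ 0 := fun h ↦ hx <| transvection_injective zero_ne_one <| hφ <| by
    simp [hu, h]
  apply mul_eq_neg_one_of_braid_upper_lower hax
  simpa only [map_mul, hu, hl] using congrArg φ (braid_upper_lower hx)

lemma addMonoidHom_eq_of_map_upper_lower (hφ : Function.Injective φ)
    (hu : ∀ x, φ (upper x) = upper (a x)) (hl : ∀ x, φ (lower x) = lower (b x)) (h1 : a 1 = 1) :
    b = a := by
  have hb1 : b (-1) = -1 := by
    simpa [h1] using mul_eq_neg_one_of_map_upper_lower hφ hu hl one_ne_zero
  ext x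
  have hweyl := congrArg φ (weyl_mul_upper x)
  simp only [map_mul, hu, hl, h1, hb1] at hweyl
  rw [weyl_mul_upper, mul_left_inj] at hweyl
  simpa using (transvection_injective _ hweyl).symm

lemma exists_eq_map_of_map_upper_lower (hφ : Function.Injective φ)
    (hu : ∀ x, φ (upper x) = upper (a x)) (hl : ∀ x, φ (lower x) = lower (b x)) (h1 : a 1 = 1) :
    ∃ σ : k →+* K, φ = map σ := by
  obtain rfl := addMonoidHom_eq_of_map_upper_lower hφ hu hl h1
  have hinv {x : k} (hx : x ≠ 0) : b x * b x⁻¹ = 1 := by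
    simpa using mul_eq_neg_one_of_map_upper_lower hφ hu hl hx
  have hdiag {x : k} (hx : x ≠ 0) :
      φ (diag2 x hx) = diag2 (b x) (left_ne_zero_of_mul_eq_one (hinv hx)) := by
    simp only [diag2_decompose, map_mul, hu, hl, map_neg, h1, eq_inv_of_mul_eq_one_right (hinv hx)]
  have hmul (x y : k) : b (x * y) = b x * b y := by
    rcases eq_or_ne x 0 with rfl | hx
    · simp
    rcases eq_or_ne y 0 with rfl | hy
    · simp
    have hdiag_mul : diag2 (x * y) (mul_ne_zero hx hy) = diag2 x hx * diag2 y hy :=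
      Subtype.ext <| by simp [diag2_coe', mul_comm]
    have h := congrArg φ hdiag_mul
    rw [map_mul, hdiag, hdiag, hdiag] at h
    simpa [diag2_coe'] using congr(($h).1 0 0)
  let σ : k →+* K := { b with map_one' := h1, map_mul' := hmul }
  refine ⟨σ, monoidHom_ext_upper_lower (fun x ↦ ?_) fun x ↦ ?_⟩
  · rw [hu, map_transvection]; rfl
  · rw [hl, map_transvection]; rfl

theorem exists_eq_conjGL_map_of_injective (p : ℕ) [CharP k p] [CharP K p]
    (hφ : Function.Injective φ) :
    ∃ (g : GL (Fin 2) K) (σ : k →+* K), ∀ A, φ A = conjGL g (map σ A) := by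
  have hcomm : ¬ Commute (φ (upper 1)) (φ (lower 1)) := fun h ↦
    not_commute_upper_lower one_ne_zero one_ne_zero (hφ (by simpa only [map_mul] using h.eq))
  obtain ⟨g, c, hg_upper, hg_lower⟩ := exists_conjGL_upper_lower_eq
    (trace_map_transvection p hφ _ 1) (trace_map_transvection p hφ _ 1) hcomm
  let ψ : SL(2, k) →* SL(2, K) := ((conjGL g).symm : SL(2, K) →* SL(2, K)).comp φ
  have hψ : Function.Injective ψ := (conjGL g).symm.injective.comp hφ
  have hψ_upper : ψ (upper 1) = upper 1 := (conjGL g).symm_apply_eq.2 hg_upper.symm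
  have hψ_lower : ψ (lower 1) = lower c := (conjGL g).symm_apply_eq.2 hg_lower.symm
  have hc : c ≠ 0 := by
    rintro rfl
    have hone : φ (lower 1) = 1 := by simpa using hg_lower.symm
    exact hcomm (hone ▸ .one_right _)
  obtain ⟨a, ha⟩ := exists_addMonoidHom_map_transvection (φ := ψ) fun x ↦
    exists_eq_upper_of_commute (trace_map_transvection p hψ zero_ne_one x) one_ne_zero <|
      hψ_upper ▸ (commute_transvection _ x 1).map ψ
  obtain ⟨b, hb⟩ := exists_addMonoidHom_map_transvection (φ := ψ) fun x ↦
    exists_eq_lower_of_commute (trace_map_transvection p hψ one_ne_zero x) hc <|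
      hψ_lower ▸ (commute_transvection _ x 1).map ψ
  have ha1 : a 1 = 1 := transvection_injective zero_ne_one ((ha 1).symm.trans hψ_upper)
  obtain ⟨σ, hσ⟩ := exists_eq_map_of_map_upper_lower hψ ha hb ha1
  exact ⟨g, σ, fun A ↦ (conjGL g).symm_apply_eq.1 congr($hσ A)⟩

lemma surjective_of_map_surjective {R S : Type*} [CommRing R] [CommRing S] {σ : R →+* S}
    (h : Function.Surjective (map σ : SL(2, R) →* SL(2, S))) : Function.Surjective σ := fun y ↦ by
  obtain ⟨A, hA⟩ := h (upper y)
  exact ⟨A 0 1, by simpa [coe_upper] using congr(($hA).1 0 1)⟩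

theorem mulAut_exists_eq_conjGL_map (φ : MulAut SL(2, k)) :
    ∃ (g : GL (Fin 2) k) (σ : k ≃+* k), ∀ A, φ A = conjGL g (map (σ : k →+* k) A) := by
  obtain ⟨p, _⟩ := CharP.exists k
  obtain ⟨g, σ, h⟩ := exists_eq_conjGL_map_of_injective (φ := φ.toMonoidHom) p φ.injective
  have hmap : ⇑(map σ) = (conjGL g).symm ∘ φ := funext fun A ↦
    ((conjGL g).symm_apply_eq.2 (h A)).symm
  have hσ : Function.Surjective σ := surjective_of_map_surjective <|
    hmap ▸ (conjGL g).symm.surjective.comp φ.surjective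
  exact ⟨g, .ofBijective σ ⟨σ.injective, hσ⟩, h⟩

end Homomorphisms

end AutSL2

theorem stmt18_general (k : Type*) [Field k] :
    (∀ φ : MulAut (Matrix.SpecialLinearGroup (Fin 2) k),
      ∃ (g : GL (Fin 2) k) (σ : k ≃+* k),
        ∀ A : Matrix.SpecialLinearGroup (Fin 2) k,
          (φ A : Matrix (Fin 2) (Fin 2) k) =
            (g : Matrix (Fin 2) (Fin 2) k) * ((A : Matrix (Fin 2) (Fin 2) k).map ⇑σ) *
              ((g⁻¹ : GL (Fin 2) k) : Matrix (Fin 2) (Fin 2) k)) ∧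
    (∀ (g : GL (Fin 2) k) (σ : k ≃+* k),
      (∀ A : Matrix.SpecialLinearGroup (Fin 2) k,
        (g : Matrix (Fin 2) (Fin 2) k) * ((A : Matrix (Fin 2) (Fin 2) k).map ⇑σ) *
            ((g⁻¹ : GL (Fin 2) k) : Matrix (Fin 2) (Fin 2) k) =
          (A : Matrix (Fin 2) (Fin 2) k)) →
      σ = RingEquiv.refl k ∧
        ∃ c : kˣ, (g : Matrix (Fin 2) (Fin 2) k) = (c : k) • (1 : Matrix (Fin 2) (Fin 2) k)) := by
  refine ⟨fun φ ↦ ?_, fun g σ h ↦ ?_⟩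
  · obtain ⟨g, σ, hφ⟩ := AutSL2.mulAut_exists_eq_conjGL_map φ
    exact ⟨g, σ, fun A ↦ congrArg Subtype.val (hφ A)⟩
  · obtain ⟨hσ, hg⟩ := AutSL2.eq_and_eq_scalar_of_forall_mul_map_eq (g := g) (σ := (σ : k →+* k))
      (τ := .id k) fun A ↦ (Units.mul_inv_eq_iff_eq_mul g).1 (h A)
    exact ⟨RingEquiv.ext fun x ↦ congr($hσ x), hg⟩

/-- `Aut(SL₂(k)) ≅ PΓL₂(k)` for `|k| > 3`: every automorphism of `SL₂(k)`
is the composition of conjugation by an element of `GL₂(k)` with the entrywise action of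
a field automorphism of `k`, and such a pair `(g, σ)` induces the identity automorphism
precisely when `σ = id` and `g` is scalar (i.e. the map `PΓL₂(k) → Aut(SL₂(k))` is
bijective). -/
theorem stmt18 (k : Type) [Field k] (hk : 3 < Nat.card k ∨ Infinite k) :
    (∀ φ : MulAut (Matrix.SpecialLinearGroup (Fin 2) k),
      ∃ (g : GL (Fin 2) k) (σ : k ≃+* k),
        ∀ A : Matrix.SpecialLinearGroup (Fin 2) k,
          (φ A : Matrix (Fin 2) (Fin 2) k) =
            (g : Matrix (Fin 2) (Fin 2) k) * ((A : Matrix (Fin 2) (Fin 2) k).map ⇑σ) *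
              ((g⁻¹ : GL (Fin 2) k) : Matrix (Fin 2) (Fin 2) k)) ∧
    (∀ (g : GL (Fin 2) k) (σ : k ≃+* k),
      (∀ A : Matrix.SpecialLinearGroup (Fin 2) k,
        (g : Matrix (Fin 2) (Fin 2) k) * ((A : Matrix (Fin 2) (Fin 2) k).map ⇑σ) *
            ((g⁻¹ : GL (Fin 2) k) : Matrix (Fin 2) (Fin 2) k) =
          (A : Matrix (Fin 2) (Fin 2) k)) →
      σ = RingEquiv.refl k ∧
        ∃ c : kˣ, (g : Matrix (Fin 2) (Fin 2) k) = (c : k) • (1 : Matrix (Fin 2) (Fin 2) k)) :=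
  stmt18_general k
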